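/- Let Ω ⊂ ℝ^d be compact and convex with non-negligible interior, let μ, ν ∈ 𝒫(Ω) both be absolutely continuous with respect to Lebesgue measure, and let (λ_n)_{n≥0} be positive step sizes with Σ_{n=0}^∞ λ_n = +∞. Define μ₀ = μ and, for n ≥ 0, μ_{n+1} = argmin_{ρ ∈ 𝒫(Ω)} (1/2)W₂²(ρ, μ_n) + λ_n W₁(ρ, ν) (well defined since each argmin exists, is unique, and is absolutely continuous). Then lim_{n → ∞} W₁(μ_n, ν) = 0. -/

import Mathlib

/-!
The energy `W₁(·, ν)` contracts along the scheme. Let `ρ = μ_{n+1}`, `λ = λ_n` and let `D` bound the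
diameter of `Ω`.

* Comparing `ρ` with `μ_n` itself gives `W₂²(ρ, μ_n) / 2 + λ W₁(ρ, ν) ≤ λ W₁(μ_n, ν)`.
* Glue nearly optimal plans from `ρ` to `μ_n` and from `ρ` to `ν` into a measure on triples
  `(z, x, y)`, and compare `ρ` with the law of `z + t (y - z)`, which stays in `Ω` by convexity.
  Since `|z + t (y - z) - y| = (1 - t) |z - y|`, the `W₁` term falls at rate `λ W₁(ρ, ν)`, while the
  `W₂²` term grows at rate at most `∫ |z - x| |z - y|`; Young's inequality and `|z - y| ≤ D` then
  give `λ² W₁(ρ, ν) ≤ D W₂²(ρ, μ_n)` as `t → 0` (`W1_le_W2sq_of_minimizer`).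

Together, `(1 + λ_n / (2D)) W₁(μ_{n+1}, ν) ≤ W₁(μ_n, ν)`, and the product of these factors diverges
because `∑ λ_n = ∞` (`tendsto_zero_of_contract`).
-/

open MeasureTheory Filter Topology

noncomputable section

abbrev Ed (d : ℕ) := EuclideanSpace ℝ (Fin d)

variable {d : ℕ}

/-- `γ` is a coupling (transport plan) between `μ` and `ν`. -/
def IsCoupling (μ ν : Measure (Ed d)) (γ : Measure (Ed d × Ed d)) : Prop :=
  γ.map Prod.fst = μ ∧ γ.map Prod.snd = ν

/-- The optimal transport cost `𝓘_c(μ,ν)` for the pointwise cost `c`. -/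
def tCost (c : Ed d → Ed d → ℝ) (μ ν : Measure (Ed d)) : ℝ :=
  sInf {r | ∃ γ : Measure (Ed d × Ed d), IsCoupling μ ν γ ∧ r = ∫ p, c p.1 p.2 ∂γ}

/-- The Wasserstein-1 distance. -/
def W1 (μ ν : Measure (Ed d)) : ℝ := tCost (fun x y => ‖x - y‖) μ ν

/-- The squared Wasserstein-2 distance `W₂²(μ,ν)`. -/
def W2sq (μ ν : Measure (Ed d)) : ℝ := tCost (fun x y => ‖x - y‖ ^ 2) μ ν

/-- The quadratic cost `c₂(x,y) = |x-y|²/2`. -/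
def c2 (x y : Ed d) : ℝ := ‖x - y‖ ^ 2 / 2

/-- The Huber cost `c_{2,λ}`. -/
def huber (lam : ℝ) (x y : Ed d) : ℝ :=
  if ‖x - y‖ ≤ lam then ‖x - y‖ ^ 2 / 2 else lam * ‖x - y‖ - lam ^ 2 / 2

/-- The `c`-transform on `Ω`: `φ^c(x) = inf_{y ∈ Ω} c(x,y) - φ(y)`. -/
def ctrans (c : Ed d → Ed d → ℝ) (Ω : Set (Ed d)) (φ : Ed d → ℝ) (x : Ed d) : ℝ :=
  sInf ((fun y => c x y - φ y) '' Ω)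

/-- A Borel probability measure concentrated on `Ω`. -/
def ProbOn (Ω : Set (Ed d)) (μ : Measure (Ed d)) : Prop :=
  IsProbabilityMeasure μ ∧ μ Ωᶜ = 0

/-- `γ` is an optimal transport plan between `μ` and `ν` for cost `c`. -/
def IsOptimalPlan (c : Ed d → Ed d → ℝ) (μ ν : Measure (Ed d))
    (γ : Measure (Ed d × Ed d)) : Prop :=
  IsCoupling μ ν γ ∧ ∀ γ' : Measure (Ed d × Ed d), IsCoupling μ ν γ' →
    ∫ p, c p.1 p.2 ∂γ ≤ ∫ p, c p.1 p.2 ∂γ'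

/-- `T` is an optimal transport map from `μ` to `ν` for cost `c`. -/
def IsOptimalMap (c : Ed d → Ed d → ℝ) (μ ν : Measure (Ed d)) (T : Ed d → Ed d) : Prop :=
  AEMeasurable T μ ∧ μ.map T = ν ∧
    ∀ γ : Measure (Ed d × Ed d), IsCoupling μ ν γ →
      ∫ x, c x (T x) ∂μ ≤ ∫ p, c p.1 p.2 ∂γ

/-- The WROF functional `(1/2) W₂²(μ,ρ) + λ W₁(ρ,ν)`. -/
def wrof (lam : ℝ) (μ ν ρ : Measure (Ed d)) : ℝ := W2sq μ ρ / 2 + lam * W1 ρ ν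

/-- `ρ ∈ B_λ(μ)`: there exists an optimal plan for the Huber cost `c_{2,λ}` from `μ` to `ρ`
supported in `{|x-y| ≤ λ}`. -/
def Bset (lam : ℝ) (μ ρ : Measure (Ed d)) : Prop :=
  ∃ γ : Measure (Ed d × Ed d), IsOptimalPlan (huber lam) μ ρ γ ∧
    γ {p : Ed d × Ed d | lam < ‖p.1 - p.2‖} = 0

/-- `φ` solves the dual problem `sup_{φ ∈ λ-Lip(Ω)} ∫ φ^{c₂} dμ + ∫ φ dν`. -/
def DualSol (Ω : Set (Ed d)) (lam : ℝ) (μ ν : Measure (Ed d)) (φ : Ed d → ℝ) : Prop :=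
  LipschitzOnWith (Real.toNNReal lam) φ Ω ∧
    ∀ ψ : Ed d → ℝ, LipschitzOnWith (Real.toNNReal lam) ψ Ω →
      (∫ x, ctrans c2 Ω ψ x ∂μ) + ∫ x, ψ x ∂ν ≤ (∫ x, ctrans c2 Ω φ x ∂μ) + ∫ x, φ x ∂ν

/-- `φ ∈ ∂((1/2)W₂²(·,μ))(ρ)`, i.e. `φ ∈ C(Ω)` with `∫φ^{c₂}dμ + ∫φ dρ = (1/2)W₂²(ρ,μ)`. -/
def InSubdiffW2 (Ω : Set (Ed d)) (μ ρ : Measure (Ed d)) (φ : Ed d → ℝ) : Prop :=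
  ContinuousOn φ Ω ∧ (∫ x, ctrans c2 Ω φ x ∂μ) + ∫ x, φ x ∂ρ = W2sq ρ μ / 2

/-- The divergence `D_λ(ν,ρ)` with reference measure `μ`. -/
def Dlam (Ω : Set (Ed d)) (lam : ℝ) (μ ν ρ : Measure (Ed d)) : EReal :=
  ((W2sq ν μ / 2 : ℝ) : EReal) - ((W2sq ρ μ / 2 : ℝ) : EReal) -
    ⨆ φ ∈ {φ : Ed d → ℝ | InSubdiffW2 Ω μ ρ φ ∧ LipschitzOnWith (Real.toNNReal lam) φ Ω},
      (((∫ x, φ x ∂ν) - ∫ x, φ x ∂ρ : ℝ) : EReal)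

/-- `φ` is `c`-concave on `Ω`: `φ = ψ^c` for some `ψ`. -/
def CConcaveOn (c : Ed d → Ed d → ℝ) (Ω : Set (Ed d)) (φ : Ed d → ℝ) : Prop :=
  ∃ ψ : Ed d → ℝ, ∀ x ∈ Ω, φ x = ctrans c Ω ψ x

/-- The (topological) support of a measure. -/
def msupport {α : Type*} [TopologicalSpace α] [MeasurableSpace α] (γ : Measure α) : Set α :=
  {p | ∀ U : Set α, IsOpen U → p ∈ U → γ U ≠ 0}

lemma tCost_le {c : Ed d → Ed d → ℝ} (hc : ∀ x y, 0 ≤ c x y) {μ ν : Measure (Ed d)}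
    {γ : Measure (Ed d × Ed d)} (h : IsCoupling μ ν γ) : tCost c μ ν ≤ ∫ p, c p.1 p.2 ∂γ := by
  refine csInf_le ⟨0, ?_⟩ ⟨γ, h, rfl⟩
  rintro r ⟨γ', -, rfl⟩
  exact integral_nonneg fun p => hc _ _

lemma tCost_nonneg {c : Ed d → Ed d → ℝ} (hc : ∀ x y, 0 ≤ c x y) (μ ν : Measure (Ed d)) :
    0 ≤ tCost c μ ν := by
  refine Real.sInf_nonneg ?_
  rintro r ⟨γ', -, rfl⟩
  exact integral_nonneg fun p => hc _ _

/-- Plans of cost within `ε` of the infimum exist; the product plan makes the set of costs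
nonempty, so the infimum is not a junk value. -/
lemma exists_near (c : Ed d → Ed d → ℝ) (μ ν : Measure (Ed d)) [IsProbabilityMeasure μ]
    [IsProbabilityMeasure ν] {ε : ℝ} (hε : 0 < ε) :
    ∃ γ, IsCoupling μ ν γ ∧ ∫ p, c p.1 p.2 ∂γ < tCost c μ ν + ε := by
  have hne : {r | ∃ γ : Measure (Ed d × Ed d), IsCoupling μ ν γ ∧
      r = ∫ p, c p.1 p.2 ∂γ}.Nonempty :=
    ⟨_, μ.prod ν, ⟨by simp [Measure.map_fst_prod], by simp [Measure.map_snd_prod]⟩, rfl⟩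
  obtain ⟨r, ⟨γ, hγ, rfl⟩, hr⟩ := Real.lt_sInf_add_pos hne hε
  exact ⟨γ, hγ, hr⟩

lemma W2sq_self (μ : Measure (Ed d)) : W2sq μ μ = 0 := by
  refine le_antisymm ?_ (tCost_nonneg (fun x y => by positivity) _ _)
  have hm : Measurable fun x : Ed d => (x, x) := by fun_prop
  have h : IsCoupling μ μ (μ.map fun x => (x, x)) := by
    constructor
    · rw [Measure.map_map measurable_fst hm]
      exact Measure.map_id
    · rw [Measure.map_map measurable_snd hm]
      exact Measure.map_id
  refine (tCost_le (c := fun x y => ‖x - y‖ ^ 2) (fun x y => by positivity) h).trans ?_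
  rw [integral_map hm.aemeasurable (by fun_prop)]
  simp

/-- Gluing: two plans with the same first marginal `ρ` come from one measure on triples, under which
the two second coordinates are conditionally independent given the first. -/
lemma exists_glue {ρ μ ν : Measure (Ed d)} [IsProbabilityMeasure ρ]
    {γ₁ γ₂ : Measure (Ed d × Ed d)} (h₁ : IsCoupling ρ μ γ₁) (h₂ : IsCoupling ρ ν γ₂) :
    ∃ Γ : Measure (Ed d × Ed d × Ed d),
      Γ.map (fun p => (p.1, p.2.1)) = γ₁ ∧ Γ.map (fun p => (p.1, p.2.2)) = γ₂ := by
  have hp : ∀ {σ : Measure (Ed d)} {γ : Measure (Ed d × Ed d)}, IsCoupling ρ σ γ →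
      IsProbabilityMeasure γ := fun {σ γ} h => by
    have : IsProbabilityMeasure (γ.map Prod.fst) := by rw [h.1]; infer_instance
    exact Measure.isProbabilityMeasure_of_map Prod.fst
  have := hp h₁
  have := hp h₂
  have e₁ : ρ.compProd γ₁.condKernel = γ₁ := by
    conv_lhs => rw [← h₁.1]
    exact γ₁.disintegrate γ₁.condKernel
  have e₂ : ρ.compProd γ₂.condKernel = γ₂ := by
    conv_lhs => rw [← h₂.1]
    exact γ₂.disintegrate γ₂.condKernel
  refine ⟨ρ.compProd (γ₁.condKernel.prod γ₂.condKernel), ?_, ?_⟩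
  · have := Measure.compProd_map (μ := ρ)
      (κ := γ₁.condKernel.prod γ₂.condKernel)
      (measurable_fst : Measurable (Prod.fst : Ed d × Ed d → Ed d))
    rw [← ProbabilityTheory.Kernel.fst_eq, ProbabilityTheory.Kernel.fst_prod, e₁] at this
    exact this.symm
  · have := Measure.compProd_map (μ := ρ)
      (κ := γ₁.condKernel.prod γ₂.condKernel)
      (measurable_snd : Measurable (Prod.snd : Ed d × Ed d → Ed d))
    rw [← ProbabilityTheory.Kernel.snd_eq, ProbabilityTheory.Kernel.snd_prod, e₂] at this
    exact this.symm

/-- The pointwise cost of moving `z` to `z + t (y - z)`: Young's inequality with weight `D / l`,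
together with `‖z - y‖ ≤ D`. -/
lemma norm_move_sq_le {x y z : Ed d} {t l D : ℝ} (ht : 0 ≤ t) (hl : 0 < l) (hD : 0 < D)
    (hzy : ‖z - y‖ ≤ D) :
    ‖z + t • (y - z) - x‖ ^ 2
      ≤ (1 + t * (D / l)) * ‖z - x‖ ^ 2 + t * l * ‖z - y‖ + t ^ 2 * D ^ 2 := by
  have h1 : ‖z + t • (y - z) - x‖ ≤ ‖z - x‖ + t * ‖z - y‖ := by
    have : z + t • (y - z) - x = (z - x) + t • (y - z) := by abel
    rw [this]
    refine (norm_add_le _ _).trans ?_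
    rw [norm_smul, Real.norm_of_nonneg ht, norm_sub_rev y z]
  have ha := norm_nonneg (z - x)
  have hb := norm_nonneg (z - y)
  generalize ‖z - x‖ = a at *
  generalize ‖z - y‖ = b at *
  have h2 : 2 * a * b ≤ D / l * a ^ 2 + l * b := by
    have hb2 : l / D * b ^ 2 ≤ l * b := by
      rw [div_mul_eq_mul_div, div_le_iff₀ hD]
      nlinarith [mul_nonneg hl.le hb]
    have : D / l * a ^ 2 + l / D * b ^ 2 - 2 * a * b = D / l * (a - l / D * b) ^ 2 := by
      field_simp
      ring
    have : 0 ≤ D / l * (a - l / D * b) ^ 2 := by positivity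
    linarith
  calc _ ≤ (a + t * b) ^ 2 := by gcongr
    _ = a ^ 2 + t * (2 * a * b) + t ^ 2 * b ^ 2 := by ring
    _ ≤ a ^ 2 + t * (D / l * a ^ 2 + l * b) + t ^ 2 * D ^ 2 := by gcongr
    _ = _ := by ring

/-- The competitor: the law of `z + t (y - z)` under a glued plan that is `ε`-optimal in both
components. -/
lemma exists_competitor {Ω : Set (Ed d)} (hΩc : IsCompact Ω) (hΩconv : Convex ℝ Ω)
    {ρ μ ν : Measure (Ed d)} (hρ : ProbOn Ω ρ) (hμ : ProbOn Ω μ) (hν : ProbOn Ω ν)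
    {t l D ε : ℝ} (ht : 0 < t) (ht1 : t ≤ 1) (hl : 0 < l) (hD : 0 < D) (hε : 0 < ε)
    (hdiam : ∀ x ∈ Ω, ∀ y ∈ Ω, ‖x - y‖ ≤ D) :
    ∃ ρ', ProbOn Ω ρ' ∧ W1 ρ' ν ≤ (1 - t) * (W1 ρ ν + ε) ∧
      W2sq ρ' μ ≤ (1 + t * (D / l)) * (W2sq ρ μ + ε) + t * l * (W1 ρ ν + ε) + t ^ 2 * D ^ 2 := by
  have := hρ.1
  have := hμ.1
  have := hν.1
  obtain ⟨γ₁, hγ₁, hB⟩ := exists_near (fun x y => ‖x - y‖ ^ 2) ρ μ hε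
  obtain ⟨γ₂, hγ₂, hA⟩ := exists_near (fun x y => ‖x - y‖) ρ ν hε
  obtain ⟨Γ, h₁, h₂⟩ := exists_glue hγ₁ hγ₂
  have m₁ : Measurable fun p : Ed d × Ed d × Ed d => (p.1, p.2.1) := by fun_prop
  have m₂ : Measurable fun p : Ed d × Ed d × Ed d => (p.1, p.2.2) := by fun_prop
  have mT : Measurable fun p : Ed d × Ed d × Ed d => p.1 + t • (p.2.2 - p.1) := by fun_prop
  have hz : Γ.map (fun p => p.1) = ρ := by
    rw [← hγ₁.1, ← h₁, Measure.map_map measurable_fst m₁]; rfl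
  have hx : Γ.map (fun p => p.2.1) = μ := by
    rw [← hγ₁.2, ← h₁, Measure.map_map measurable_snd m₁]; rfl
  have hy : Γ.map (fun p => p.2.2) = ν := by
    rw [← hγ₂.2, ← h₂, Measure.map_map measurable_snd m₂]; rfl
  have hprob : IsProbabilityMeasure Γ := by
    have : IsProbabilityMeasure (Γ.map (fun p => p.1)) := by rw [hz]; infer_instance
    exact Measure.isProbabilityMeasure_of_map (fun p : Ed d × Ed d × Ed d => p.1)
  have key : ∀ {f : Ed d × Ed d × Ed d → Ed d} {σ : Measure (Ed d)}, Measurable f →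
      Γ.map f = σ → ProbOn Ω σ → ∀ᵐ p ∂Γ, f p ∈ Ω := by
    intro f σ hf h hσ
    have : ∀ᵐ x ∂(Γ.map f), x ∈ Ω := by rw [h]; exact hσ.2
    exact ae_of_ae_map hf.aemeasurable this
  have az := key (by fun_prop) hz hρ
  have ax := key (by fun_prop) hx hμ
  have ay := key (by fun_prop) hy hν
  have iB : Integrable (fun p : Ed d × Ed d × Ed d => ‖p.1 - p.2.1‖ ^ 2) Γ := by
    refine Integrable.of_bound (by fun_prop) (D ^ 2) ?_
    filter_upwards [az, ax] with p hp hq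
    rw [Real.norm_of_nonneg (by positivity)]
    gcongr
    exact hdiam _ hp _ hq
  have iA : Integrable (fun p : Ed d × Ed d × Ed d => ‖p.1 - p.2.2‖) Γ := by
    refine Integrable.of_bound (by fun_prop) D ?_
    filter_upwards [az, ay] with p hp hq
    rw [Real.norm_of_nonneg (by positivity)]
    exact hdiam _ hp _ hq
  have eB : ∫ p, ‖p.1 - p.2.1‖ ^ 2 ∂Γ < W2sq ρ μ + ε := by
    rw [← h₁, integral_map m₁.aemeasurable (by fun_prop)] at hB
    exact hB
  have eA : ∫ p, ‖p.1 - p.2.2‖ ∂Γ < W1 ρ ν + ε := by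
    rw [← h₂, integral_map m₂.aemeasurable (by fun_prop)] at hA
    exact hA
  refine ⟨Γ.map fun p => p.1 + t • (p.2.2 - p.1), ⟨?_, ?_⟩, ?_, ?_⟩
  · exact Measure.isProbabilityMeasure_map mT.aemeasurable
  · rw [Measure.map_apply mT hΩc.isClosed.measurableSet.compl]
    have : ∀ᵐ p ∂Γ, p.1 + t • (p.2.2 - p.1) ∈ Ω := by
      filter_upwards [az, ay] with p hp hq
      exact hΩconv.add_smul_sub_mem hp hq ⟨ht.le, ht1⟩
    exact this
  · have mg : Measurable fun p : Ed d × Ed d × Ed d => (p.1 + t • (p.2.2 - p.1), p.2.2) := by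
      fun_prop
    have hc : IsCoupling (Γ.map fun p => p.1 + t • (p.2.2 - p.1)) ν
        (Γ.map fun p => (p.1 + t • (p.2.2 - p.1), p.2.2)) := by
      constructor
      · rw [Measure.map_map measurable_fst mg]; rfl
      · rw [Measure.map_map measurable_snd mg]; exact hy
    refine (tCost_le (c := fun x y => ‖x - y‖) (fun x y => by positivity) hc).trans ?_
    rw [integral_map mg.aemeasurable (by fun_prop)]
    have : ∀ p : Ed d × Ed d × Ed d,
        ‖p.1 + t • (p.2.2 - p.1) - p.2.2‖ = (1 - t) * ‖p.1 - p.2.2‖ := fun p => by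
      have h : p.1 + t • (p.2.2 - p.1) - p.2.2 = (1 - t) • (p.1 - p.2.2) := by module
      rw [h, norm_smul, Real.norm_of_nonneg (by linarith)]
    simp only [this]
    rw [integral_const_mul]
    exact mul_le_mul_of_nonneg_left eA.le (by linarith)
  · have mg : Measurable fun p : Ed d × Ed d × Ed d => (p.1 + t • (p.2.2 - p.1), p.2.1) := by
      fun_prop
    have hc : IsCoupling (Γ.map fun p => p.1 + t • (p.2.2 - p.1)) μ
        (Γ.map fun p => (p.1 + t • (p.2.2 - p.1), p.2.1)) := by
      constructor
      · rw [Measure.map_map measurable_fst mg]; rfl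
      · rw [Measure.map_map measurable_snd mg]; exact hx
    refine (tCost_le (c := fun x y => ‖x - y‖ ^ 2) (fun x y => by positivity) hc).trans ?_
    rw [integral_map mg.aemeasurable (by fun_prop)]
    have i1 := iB.const_mul (1 + t * (D / l))
    have i2 := iA.const_mul (t * l)
    have i12 : Integrable (fun p : Ed d × Ed d × Ed d =>
        (1 + t * (D / l)) * ‖p.1 - p.2.1‖ ^ 2 + t * l * ‖p.1 - p.2.2‖) Γ := i1.add i2
    have i3 : Integrable (fun _ : Ed d × Ed d × Ed d => t ^ 2 * D ^ 2) Γ := integrable_const _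
    calc _ ≤ ∫ p, ((1 + t * (D / l)) * ‖p.1 - p.2.1‖ ^ 2 + t * l * ‖p.1 - p.2.2‖
            + t ^ 2 * D ^ 2) ∂Γ := by
          refine integral_mono_of_nonneg (ae_of_all _ fun p => by positivity)
            (i12.add i3) ?_
          filter_upwards [az, ay] with p hp hq
          exact norm_move_sq_le ht.le hl hD (hdiam _ hp _ hq)
      _ = (1 + t * (D / l)) * ∫ p, ‖p.1 - p.2.1‖ ^ 2 ∂Γ + t * l * ∫ p, ‖p.1 - p.2.2‖ ∂Γ
            + t ^ 2 * D ^ 2 := by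
          rw [integral_add i12 i3, integral_add i1 i2, integral_const_mul,
            integral_const_mul]
          simp
      _ ≤ _ := by gcongr

/-- First-order optimality of a minimizer `ρ`, tested against moving mass from `ρ` towards `ν`. -/
lemma W1_le_W2sq_of_minimizer {Ω : Set (Ed d)} (hΩc : IsCompact Ω) (hΩconv : Convex ℝ Ω)
    {ρ μ ν : Measure (Ed d)} (hρ : ProbOn Ω ρ) (hμ : ProbOn Ω μ) (hν : ProbOn Ω ν)
    {l D : ℝ} (hl : 0 < l) (hD : 0 < D) (hdiam : ∀ x ∈ Ω, ∀ y ∈ Ω, ‖x - y‖ ≤ D)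
    (hmin : ∀ ρ', ProbOn Ω ρ' → W2sq ρ μ / 2 + l * W1 ρ ν ≤ W2sq ρ' μ / 2 + l * W1 ρ' ν) :
    l * W1 ρ ν ≤ D / l * W2sq ρ μ := by
  set w := W1 ρ ν
  set v := W2sq ρ μ
  have step : ∀ t : ℝ, 0 < t → t ≤ 1 → v / 2 + l * w ≤
      ((1 + t * (D / l)) * v + t * l * w + t ^ 2 * D ^ 2) / 2 + l * ((1 - t) * w) := by
    intro t ht ht1
    have hlim : Tendsto (fun ε : ℝ => ((1 + t * (D / l)) * (v + ε) + t * l * (w + ε)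
        + t ^ 2 * D ^ 2) / 2 + l * ((1 - t) * (w + ε))) (𝓝[>] 0)
        (𝓝 (((1 + t * (D / l)) * (v + 0) + t * l * (w + 0)
        + t ^ 2 * D ^ 2) / 2 + l * ((1 - t) * (w + 0)))) :=
      ((by fun_prop : Continuous fun ε : ℝ => ((1 + t * (D / l)) * (v + ε) + t * l * (w + ε)
        + t ^ 2 * D ^ 2) / 2 + l * ((1 - t) * (w + ε))).tendsto 0).mono_left nhdsWithin_le_nhds
    simp only [add_zero] at hlim
    refine ge_of_tendsto hlim ?_
    filter_upwards [self_mem_nhdsWithin] with ε hε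
    obtain ⟨ρ', h, h1, h2⟩ := exists_competitor hΩc hΩconv hρ hμ hν ht ht1 hl hD hε hdiam
    refine (hmin ρ' h).trans ?_
    gcongr
  have step' : ∀ t : ℝ, 0 < t → t ≤ 1 → l * w ≤ D / l * v + t * D ^ 2 := by
    intro t ht ht1
    have := step t ht ht1
    refine le_of_mul_le_mul_left ?_ ht
    linarith
  have hlim : Tendsto (fun t : ℝ => D / l * v + t * D ^ 2) (𝓝[>] 0)
      (𝓝 (D / l * v + 0 * D ^ 2)) :=
    ((by fun_prop : Continuous fun t : ℝ => D / l * v + t * D ^ 2).tendsto 0).mono_left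
      nhdsWithin_le_nhds
  simp only [zero_mul, add_zero] at hlim
  refine ge_of_tendsto hlim ?_
  filter_upwards [Ioc_mem_nhdsGT (zero_lt_one' ℝ)] with t ht
  exact step' t ht.1 ht.2

/-- The contraction factors multiply to at least `1 + ∑ c n`, which tends to infinity. -/
lemma tendsto_zero_of_contract {a c : ℕ → ℝ} (ha : ∀ n, 0 ≤ a n) (hc : ∀ n, 0 ≤ c n)
    (h : ∀ n, (1 + c n) * a (n + 1) ≤ a n)
    (hdiv : Tendsto (fun N => ∑ n ∈ Finset.range N, c n) atTop atTop) :
    Tendsto a atTop (𝓝 0) := by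
  have hS : ∀ N, 0 ≤ ∑ n ∈ Finset.range N, c n := fun N => Finset.sum_nonneg fun n _ => hc n
  have hb : ∀ N, a N * (1 + ∑ n ∈ Finset.range N, c n) ≤ a 0 := by
    intro N
    induction N with
    | zero => simp
    | succ N ih =>
      refine le_trans ?_ ih
      rw [Finset.sum_range_succ]
      have h1 := mul_le_mul_of_nonneg_right (h N) (add_nonneg zero_le_one (hS N))
      have h2 := mul_nonneg (mul_nonneg (hc N) (hS N)) (ha (N + 1))
      linarith
  have hlim : Tendsto (fun N => a 0 / (1 + ∑ n ∈ Finset.range N, c n)) atTop (𝓝 0) :=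
    (tendsto_const_nhds).div_atTop (tendsto_atTop_add_const_left _ 1 hdiv)
  refine squeeze_zero ha (fun N => ?_) hlim
  rw [le_div_iff₀ (by linarith [hS N])]
  exact hb N

/-- iterative regularization converges to the clean data. Let `Ω ⊂ ℝ^d`
be compact convex with non-negligible interior, `μ, ν ∈ 𝒫(Ω)` both absolutely continuous,
and `(λ_n)` positive step sizes with divergent sum. If `μ₀ = μ` and `μ_{n+1}` is the
minimizer of `ρ ↦ (1/2)W₂²(ρ,μ_n) + λ_n W₁(ρ,ν)` over `𝒫(Ω)`, then `W₁(μ_n, ν) → 0`. -/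
theorem stmt17 (d : ℕ) (Ω : Set (Ed d)) (hΩc : IsCompact Ω) (hΩconv : Convex ℝ Ω)
    (hΩint : volume (interior Ω) ≠ 0)
    (μ ν : Measure (Ed d)) (hμ : ProbOn Ω μ) (hν : ProbOn Ω ν)
    (hμac : μ ≪ (volume : Measure (Ed d))) (hνac : ν ≪ (volume : Measure (Ed d)))
    (lams : ℕ → ℝ) (hlams : ∀ n, 0 < lams n)
    (hdiv : Tendsto (fun N => ∑ n ∈ Finset.range N, lams n) atTop atTop)
    (μs : ℕ → Measure (Ed d)) (h0 : μs 0 = μ)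
    (hstep : ∀ n : ℕ, ProbOn Ω (μs (n + 1)) ∧
      ∀ ρ, ProbOn Ω ρ →
        W2sq (μs (n + 1)) (μs n) / 2 + lams n * W1 (μs (n + 1)) ν
          ≤ W2sq ρ (μs n) / 2 + lams n * W1 ρ ν) :
    Tendsto (fun n => W1 (μs n) ν) atTop (nhds 0) := by
  obtain ⟨D, hD, hdiam⟩ : ∃ D : ℝ, 0 < D ∧ ∀ x ∈ Ω, ∀ y ∈ Ω, ‖x - y‖ ≤ D := by
    obtain ⟨C, hC⟩ := Metric.isBounded_iff.1 hΩc.isBounded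
    refine ⟨max C 1, by positivity, fun x hx y hy => ?_⟩
    rw [← dist_eq_norm]
    exact (hC hx hy).trans (le_max_left _ _)
  have hprob : ∀ n, ProbOn Ω (μs n) := by
    intro n
    cases n with
    | zero => rwa [h0]
    | succ n => exact (hstep n).1
  refine tendsto_zero_of_contract (c := fun n => lams n / (2 * D))
    (fun n => tCost_nonneg (fun x y => norm_nonneg _) _ _)
    (fun n => (div_pos (hlams n) (by positivity)).le) (fun n => ?_) ?_
  · have h1 := (hstep n).2 (μs n) (hprob n)
    rw [W2sq_self] at h1
    have h2 := W1_le_W2sq_of_minimizer hΩc hΩconv (hprob (n + 1)) (hprob n) hν (hlams n) hD hdiam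
      (hstep n).2
    have hl := hlams n
    generalize W1 (μs (n + 1)) ν = w at *
    generalize W2sq (μs (n + 1)) (μs n) = v at *
    have h3 : lams n * (lams n / (2 * D)) * w ≤ v / 2 := by
      have := mul_le_mul_of_nonneg_left h2 (by positivity : 0 ≤ lams n / (2 * D))
      calc _ = lams n / (2 * D) * (lams n * w) := by ring
        _ ≤ _ := this
        _ = v / 2 := by field_simp
    refine le_of_mul_le_mul_left ?_ hl
    linarith
  · simp only [← Finset.sum_div]
    exact hdiv.atTop_div_const (by positivity)
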